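/- Let K ⊂ ℂ be compact, connected, full, and locally connected. Then the closure of any connected component of the interior of K has locally connected boundary. -/

import Mathlib

open Set Metric Filter Topology

/-- A set is full if its complement has no bounded connected components. -/
def IsFull (K : Set ℂ) : Prop :=
  ∀ w ∉ K, ¬ Bornology.IsBounded (connectedComponentIn Kᶜ w)

/-- Nonvanishing continuous functions on a normed space have continuous logarithms. -/
theorem exists_continuous_log {E : Type*} [NormedAddCommGroup E] [NormedSpace ℝ E] {f : E → ℂ}
    (hf : Continuous f) (h0 : ∀ x, f x ≠ 0) :
    ∃ g : E → ℂ, Continuous g ∧ ∀ x, Complex.exp (g x) = f x := by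
  obtain ⟨F, ⟨-, hF⟩, -⟩ := Complex.isCoveringMapOn_exp.existsUnique_continuousMap_lifts
    (A := E) ⟨f, hf⟩ (a₀ := 0) (e₀ := Complex.log (f 0)) (Complex.exp_log (h0 0))
    (fun x => h0 x)
  exact ⟨F, F.continuous, fun x => congrFun hF x⟩

/-- A continuous function on a preconnected set with values in the integer multiples of `2πi`
is constant. -/
theorem eq_of_forall_exp_eq_one {X : Type*} [TopologicalSpace X] {s : Set X}
    (hs : IsPreconnected s) {f : X → ℂ} (hf : ContinuousOn f s)
    (h1 : ∀ x ∈ s, Complex.exp (f x) = 1) {x y : X} (hx : x ∈ s) (hy : y ∈ s) : f x = f y := by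
  have hc : ContinuousOn (fun z => (f z / (2 * Real.pi * Complex.I)).re) s := by fun_prop
  have hval : ∀ z ∈ s, ∃ n : ℤ, f z = n * (2 * Real.pi * Complex.I) := fun z hz =>
    Complex.exp_eq_one_iff.1 (h1 z hz)
  have hmaps : MapsTo (fun z => (f z / (2 * Real.pi * Complex.I)).re) s
      (range ((↑) : ℤ → ℝ)) := by
    intro z hz
    obtain ⟨n, hn⟩ := hval z hz
    refine ⟨n, ?_⟩
    simp [hn]
  have hconst := hs.constant_of_mapsTo
    (T := range ((↑) : ℤ → ℝ)) Int.isClosedEmbedding_coe_real.isEmbedding.isDiscrete_range hc hmaps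
      hx hy
  obtain ⟨n, hn⟩ := hval x hx
  obtain ⟨m, hm⟩ := hval y hy
  simp only [hn, hm] at hconst ⊢
  simpa [Complex.two_pi_I_ne_zero] using hconst

/-- The variation of the logarithm of `e - w` along a path `e` avoiding `w`. -/
theorem exists_log_variation {e : ℝ → ℂ} (he : Continuous e) {w : ℂ} (hw : ∀ s, e s ≠ w) :
    ∃ a : ℂ, Complex.exp a = (e 1 - w) / (e 0 - w) ∧
      ∀ (c : ℂ) (L : ℝ → ℂ), Continuous L → (∀ s, Complex.exp (L s) = c * (e s - w)) →
        L 1 - L 0 = a := by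
  obtain ⟨g, hg, hge⟩ := exists_continuous_log (f := fun s => e s - w) (by fun_prop)
    (fun s => sub_ne_zero.2 (hw s))
  refine ⟨g 1 - g 0, by rw [Complex.exp_sub, hge, hge], fun c L hL hLe => ?_⟩
  have hc : c ≠ 0 := by
    rintro rfl
    simpa using hLe 0
  have := eq_of_forall_exp_eq_one (s := univ) isPreconnected_univ
    (f := fun s => L s - g s - Complex.log c) (by fun_prop) (fun s _ => by
      rw [Complex.exp_sub, Complex.exp_sub, hge, hLe, Complex.exp_log hc]
      have := sub_ne_zero.2 (hw s)
      field_simp) (mem_univ 1) (mem_univ 0)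
  linear_combination this

/-- The complete bipartite graph on three and three vertices is not planar: there are no points
`u i`, `v j` joined by paths such that paths for nonadjacent edges are disjoint. -/
theorem false_of_joinedIn_completeBipartite {u v : Fin 3 → ℂ} {S : Fin 3 → Fin 3 → Set ℂ}
    (hS : ∀ i j, JoinedIn (S i j) (u i) (v j))
    (hd : ∀ i j k l, i ≠ k → j ≠ l → Disjoint (S i j) (S k l)) : False := by
  have hex : ∀ i j, ∃ e : ℝ → ℂ, Continuous e ∧ e 0 = u i ∧ e 1 = v j ∧ ∀ s, e s ∈ S i j := by
    intro i j
    obtain ⟨γ, hγ⟩ := hS i j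
    refine ⟨γ.extend, γ.continuous_extend, γ.extend_zero, γ.extend_one, fun s => ?_⟩
    have : γ.extend s ∈ range γ := γ.extend_range ▸ mem_range_self s
    obtain ⟨t, ht⟩ := this
    exact ht ▸ hγ t
  choose e hec he0 he1 heS using hex
  have hne : ∀ {i j k l}, i ≠ k → j ≠ l → ∀ s t, e i j s ≠ e k l t := fun hik hjl s t =>
    (hd _ _ _ _ hik hjl).ne_of_mem (heS _ _ s) (heS _ _ t)
  have hother : ∀ i : Fin 3, ∃ k, i ≠ k := fun i => ⟨i + 1, by revert i; decide⟩
  have hu : ∀ i j k, i ≠ k → ∀ s, e i j s ≠ u k := by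
    intro i j k hik s
    obtain ⟨l, hl⟩ := hother j
    exact he0 k l ▸ hne hik hl s 0
  have hv : ∀ i j l, j ≠ l → ∀ s, e i j s ≠ v l := by
    intro i j l hjl s
    obtain ⟨k, hk⟩ := hother i
    exact he1 k l ▸ hne hk hjl s 1
  have huu : ∀ i k, i ≠ k → u i ≠ u k := fun i k hik => he0 i 0 ▸ hu i 0 k hik 0
  have hvv : ∀ j l, j ≠ l → v j ≠ v l := fun j l hjl => he1 0 j ▸ hv 0 j l hjl 1
  have huv : ∀ i j, u i ≠ v j := by
    intro i j
    obtain ⟨l, hl⟩ := hother j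
    exact he0 i l ▸ hv i l j hl.symm 0
  have hlogs : ∀ p : Fin 3 → ℂ, (∀ i k, i ≠ k → p i ≠ p k) → ∃ U : Fin 3 → Fin 3 → ℂ,
      (∀ i k, i ≠ k → Complex.exp (U i k) = p i - p k) ∧
      ∀ i k, i < k → U k i = U i k + Real.pi * Complex.I := by
    intro p hp
    refine ⟨fun i k => if i < k then Complex.log (p i - p k)
      else Complex.log (p k - p i) + Real.pi * Complex.I, fun i k hik => ?_, fun i k hik => ?_⟩
    · have h1 := sub_ne_zero.2 (hp i k hik)
      have h2 := sub_ne_zero.2 (hp k i hik.symm)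
      dsimp only
      split_ifs
      · rw [Complex.exp_log h1]
      · rw [Complex.exp_add, Complex.exp_log h2, Complex.exp_pi_mul_I]
        ring
    · simp [hik, hik.not_gt]
  obtain ⟨U, hU, hU'⟩ := hlogs u huu
  obtain ⟨V, hV, hV'⟩ := hlogs v hvv
  have hW : ∀ i j, Complex.exp (Complex.log (u i - v j)) = u i - v j := fun i j =>
    Complex.exp_log (sub_ne_zero.2 (huv i j))
  generalize hWdef : (fun i j => Complex.log (u i - v j)) = W
  replace hW : ∀ i j, Complex.exp (W i j) = u i - v j := by subst hWdef; exact hW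
  have hn : ∀ i j k, ∃ n : ℤ, i ≠ k → ∀ (c : ℂ) (L : ℝ → ℂ), Continuous L →
      (∀ s, Complex.exp (L s) = c * (e i j s - u k)) →
      L 1 - L 0 = W k j + Real.pi * Complex.I - U i k + n * (2 * Real.pi * Complex.I) := by
    intro i j k
    by_cases hik : i = k
    · exact ⟨0, fun h => absurd hik h⟩
    obtain ⟨a, ha, haL⟩ := exists_log_variation (hec i j) (hu i j k hik)
    have : Complex.exp a = Complex.exp (W k j + Real.pi * Complex.I - U i k) := by
      rw [ha, he0, he1, Complex.exp_sub, Complex.exp_add, hW, hU i k hik, Complex.exp_pi_mul_I]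
      ring
    obtain ⟨n, hn⟩ := Complex.exp_eq_exp_iff_exists_int.1 this
    exact ⟨n, fun _ c L hL hLe => hn ▸ haL c L hL hLe⟩
  have hm : ∀ i j l, ∃ n : ℤ, j ≠ l → ∀ (c : ℂ) (L : ℝ → ℂ), Continuous L →
      (∀ s, Complex.exp (L s) = c * (e i j s - v l)) →
      L 1 - L 0 = V j l - W i l + n * (2 * Real.pi * Complex.I) := by
    intro i j l
    by_cases hjl : j = l
    · exact ⟨0, fun h => absurd hjl h⟩
    obtain ⟨a, ha, haL⟩ := exists_log_variation (hec i j) (hv i j l hjl)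
    have : Complex.exp a = Complex.exp (V j l - W i l) := by
      rw [ha, he0, he1, Complex.exp_sub, hW, hV j l hjl]
    obtain ⟨n, hn⟩ := Complex.exp_eq_exp_iff_exists_int.1 this
    exact ⟨n, fun _ c L hL hLe => hn ▸ haL c L hL hLe⟩
  choose n hn using hn
  choose m hm using hm
  have key : ∀ i k j l, i < k → j ≠ l →
      (if j < l then (-1 : ℤ) else 0) = m k l j - n k l i - m i j l + n i j k := by
    intro i k j l hik hjl
    obtain ⟨g, hg, hge⟩ := exists_continuous_log (E := ℝ × ℝ)
      (f := fun p => e i j p.1 - e k l p.2)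
      ((hec i j).comp continuous_fst |>.sub ((hec k l).comp continuous_snd))
      (fun p => sub_ne_zero.2 (hne hik.ne hjl p.1 p.2))
    have h1 := hn i j k hik.ne 1 (fun s => g (s, 0)) (by fun_prop)
      (fun s => by rw [hge]; simp [he0])
    have h2 := hm i j l hjl 1 (fun s => g (s, 1)) (by fun_prop)
      (fun s => by rw [hge]; simp [he1])
    have h3 := hn k l i hik.ne' (-1) (fun s => g (0, s)) (by fun_prop)
      (fun s => by rw [hge]; simp [he0])
    have h4 := hm k l j hjl.symm (-1) (fun s => g (1, s)) (by fun_prop)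
      (fun s => by rw [hge]; simp [he1])
    have hu' := hU' i k hik
    have h2pi := Complex.two_pi_I_ne_zero
    rcases hjl.lt_or_gt with h | h
    · have hv' := hV' j l h
      rw [if_pos h]
      have : ((-1 : ℤ) : ℂ) * (2 * Real.pi * Complex.I) =
          ((m k l j - n k l i - m i j l + n i j k : ℤ) : ℂ) * (2 * Real.pi * Complex.I) := by
        push_cast
        linear_combination h1 - h2 - h3 + h4 + hu' + hv'
      exact_mod_cast mul_right_cancel₀ h2pi this
    · have hv' := hV' l j h
      rw [if_neg h.not_gt]
      have : ((0 : ℤ) : ℂ) * (2 * Real.pi * Complex.I) =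
          ((m k l j - n k l i - m i j l + n i j k : ℤ) : ℂ) * (2 * Real.pi * Complex.I) := by
        push_cast
        linear_combination h1 - h2 - h3 + h4 + hu' - hv'
      exact_mod_cast mul_right_cancel₀ h2pi this
  clear hn hm
  have key' := fun i k hik j l hjl => key i k j l hik hjl
  have k01 := key' 0 1 (by decide)
  have k02 := key' 0 2 (by decide)
  have k12 := key' 1 2 (by decide)
  have a1 := k01 0 1 (by decide)
  have a2 := k01 0 2 (by decide)
  have a3 := k01 1 2 (by decide)
  have a4 := k01 1 0 (by decide)
  have a5 := k01 2 0 (by decide)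
  have a6 := k01 2 1 (by decide)
  have b1 := k02 0 1 (by decide)
  have b2 := k02 0 2 (by decide)
  have b3 := k02 1 2 (by decide)
  have b4 := k02 1 0 (by decide)
  have b5 := k02 2 0 (by decide)
  have b6 := k02 2 1 (by decide)
  have c1 := k12 0 1 (by decide)
  have c2 := k12 0 2 (by decide)
  have c3 := k12 1 2 (by decide)
  have c4 := k12 1 0 (by decide)
  have c5 := k12 2 0 (by decide)
  have c6 := k12 2 1 (by decide)
  simp only [Fin.isValue, Fin.reduceLT, if_true, if_false]
    at a1 a2 a3 a4 a5 a6 b1 b2 b3 b4 b5 b6 c1 c2 c3 c4 c5 c6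
  clear key key' k01 k02 k12
  omega

/-- A path leading from `G₁` to `G₂` has a point on a separating level set from which `G₁` can be
reached along the path without meeting `G₂`, and vice versa. -/
theorem exists_joinedIn_diff_of_level {γ : ℝ → ℂ} (hγ : Continuous γ) {G₁ G₂ : Set ℂ}
    (hG₁ : IsClosed G₁) (hG₂ : IsClosed G₂) {h : ℂ → ℝ} (hh : Continuous h) {m : ℝ}
    (h₁ : ∀ w ∈ G₁, h w < m) (h₂ : ∀ w ∈ G₂, m < h w) (h0 : γ 0 ∈ G₁) (h1 : γ 1 ∈ G₂) :
    ∃ p ∈ γ '' Icc 0 1, h p = m ∧ (∃ x ∈ G₁, JoinedIn (γ '' Icc 0 1 \ G₂) x p) ∧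
      ∃ y ∈ G₂, JoinedIn (γ '' Icc 0 1 \ G₁) y p := by
  obtain ⟨t₂, ht₂, hmin⟩ := (isCompact_Icc (a := (0 : ℝ)) (b := 1)).inter_right
    (hG₂.preimage hγ) |>.exists_isLeast ⟨1, ⟨zero_le_one, le_rfl⟩, h1⟩
  obtain ⟨t₁, ht₁, hmax⟩ := (isCompact_Icc (a := (0 : ℝ)) (b := t₂)).inter_right
    (hG₁.preimage hγ) |>.exists_isGreatest ⟨0, ⟨le_rfl, ht₂.1.1⟩, h0⟩
  obtain ⟨t, ht, htm⟩ := intermediate_value_Icc ht₁.1.2 (hh.comp hγ).continuousOn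
    ⟨(h₁ _ ht₁.2).le, (h₂ _ ht₂.2).le⟩
  have hlt₁ : t₁ < t := ht.1.lt_of_ne (by
    rintro rfl
    exact (h₁ _ ht₁.2).ne htm)
  have hlt₂ : t < t₂ := ht.2.lt_of_ne (by
    rintro rfl
    exact (h₂ _ ht₂.2).ne' htm)
  have hnot₂ : ∀ s ∈ Icc t₁ t, γ s ∈ γ '' Icc 0 1 \ G₂ := by
    intro s hs
    have hs01 : s ∈ Icc (0 : ℝ) 1 :=
      ⟨ht₁.1.1.trans hs.1, (hs.2.trans hlt₂.le).trans ht₂.1.2⟩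
    exact ⟨mem_image_of_mem _ hs01, fun hG => (hs.2.trans_lt hlt₂).not_ge (hmin ⟨hs01, hG⟩)⟩
  have hnot₁ : ∀ s ∈ Icc t t₂, γ s ∈ γ '' Icc 0 1 \ G₁ := by
    intro s hs
    have hs0 : 0 ≤ s := (ht₁.1.1.trans hlt₁.le).trans hs.1
    exact ⟨mem_image_of_mem _ ⟨hs0, hs.2.trans ht₂.1.2⟩,
      fun hG => (hlt₁.trans_le hs.1).not_ge (hmax ⟨⟨hs0, hs.2⟩, hG⟩)⟩
  refine ⟨γ t, (hnot₂ t ⟨ht.1, le_rfl⟩).1, htm, ⟨γ t₁, ht₁.2, ?_⟩, γ t₂, ht₂.2, ?_⟩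
  · exact (((convex_Icc t₁ t).isPathConnected ⟨t, ht.1, le_rfl⟩).image hγ).joinedIn _
      (mem_image_of_mem _ ⟨le_rfl, ht.1⟩) _ (mem_image_of_mem _ ⟨ht.1, le_rfl⟩) |>.mono
      (image_subset_iff.2 hnot₂)
  · exact (((convex_Icc t t₂).isPathConnected ⟨t, le_rfl, ht.2⟩).image hγ).joinedIn _
      (mem_image_of_mem _ ⟨ht.2, le_rfl⟩) _ (mem_image_of_mem _ ⟨le_rfl, ht.2⟩) |>.mono
      (image_subset_iff.2 hnot₁)

theorem IsConnected.isPathConnected_thickening {S : Set ℂ} (hS : IsConnected S) {ε : ℝ}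
    (hε : 0 < ε) : IsPathConnected (thickening ε S) := by
  rw [isOpen_thickening.isConnected_iff_isPathConnected.symm]
  have : thickening ε S = (fun p : ℂ × ℂ => p.1 + p.2) '' (S ×ˢ ball 0 ε) := by
    ext w
    simp only [mem_thickening_iff, mem_image, mem_prod, mem_ball, dist_zero_right, Prod.exists]
    constructor
    · rintro ⟨s, hs, hd⟩
      exact ⟨s, w - s, ⟨hs, by rwa [← dist_eq_norm]⟩, by ring⟩
    · rintro ⟨s, d, ⟨hs, hd⟩, rfl⟩
      exact ⟨s, hs, by simpa [dist_eq_norm] using hd⟩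
  rw [this]
  exact (hS.prod ((convex_ball 0 ε).isConnected ⟨0, by simpa⟩)).image _ (by fun_prop)

theorem Path.isPathConnected_range {X : Type*} [TopologicalSpace X] {x y : X} (γ : Path x y) :
    IsPathConnected (range γ) := by
  rw [← γ.extend_range, ← image_univ]
  exact (convex_univ.isPathConnected univ_nonempty).image γ.continuous_extend

/-- Points of a compact subset of the closure of a path-connected set are uniformly approximated
by points of a path in that set. -/
theorem IsPathConnected.exists_isCompact_approx {D F : Set ℂ} (hD : IsPathConnected D)
    (hF : IsCompact F) (hFD : F ⊆ closure D) {η : ℝ} (hη : 0 < η) :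
    ∃ Y ⊆ D, IsCompact Y ∧ IsPathConnected Y ∧ ∀ c ∈ F, ∃ q ∈ Y, dist c q < η := by
  obtain ⟨d, hd⟩ := hD.nonempty
  obtain ⟨t, ht⟩ := hF.elim_finite_subcover (fun q : D => ball (q : ℂ) η) (fun _ => isOpen_ball)
    (fun c hc => by
      obtain ⟨q, hq, hcq⟩ := Metric.mem_closure_iff.1 (hFD hc) η hη
      exact mem_iUnion.2 ⟨⟨q, hq⟩, hcq⟩)
  let p : Fin (t.card + 1) → ℂ := Fin.cons d fun i => ((t.equivFin.symm i : D) : ℂ)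
  obtain ⟨γ, hγ, hp⟩ := hD.exists_path_through_family p (Fin.cases hd fun i => by simp [p])
  refine ⟨range γ, hγ, isCompact_range γ.continuous, γ.isPathConnected_range,
    fun c hc => ?_⟩
  obtain ⟨q, hq, hcq⟩ := mem_iUnion₂.1 (ht hc)
  have := hp (t.equivFin ⟨q, hq⟩).succ
  exact ⟨q, by simpa [p] using this, hcq⟩

/-- Three disjoint continua in the boundary of a closed set with path-connected complement cannot
have both ends tied together by connected subsets near the centre and near the circumference of
a disc. -/
theorem false_of_three_strands {K R₁ R₂ : Set ℂ} {C : Fin 3 → Set ℂ} (hK : IsClosed K)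
    (hD : IsPathConnected Kᶜ) (hR₁ : IsConnected R₁) (hR₁K : R₁ ⊆ K) (hR₂ : IsConnected R₂)
    (hR₂K : R₂ ⊆ K) (hC : ∀ i, IsCompact (C i)) (hCc : ∀ i, IsConnected (C i))
    (hCK : ∀ i, C i ⊆ frontier K) (hdis : ∀ i j, i ≠ j → Disjoint (C i) (C j)) {a b : Fin 3 → ℂ}
    (haC : ∀ i, a i ∈ C i) (haR : ∀ i, a i ∈ R₁) (hbC : ∀ i, b i ∈ C i) (hbR : ∀ i, b i ∈ R₂)
    {z : ℂ} {r : ℝ} (hr : 0 < r) (hr₁ : ∀ w ∈ R₁, dist w z < r / 3)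
    (hr₂ : ∀ w ∈ R₂, 2 * r / 3 < dist w z) : False := by
  obtain ⟨δ, hδ, hδ0⟩ : ∃ δ, (∀ i j, i ≠ j →
      Disjoint (thickening δ (C i)) (thickening δ (C j))) ∧ 0 < δ := by
    have : ∀ᶠ δ : ℝ in 𝓝[>] 0, ∀ i j, i ≠ j →
        Disjoint (thickening δ (C i)) (thickening δ (C j)) := by
      simp only [eventually_all]
      intro i j hij
      obtain ⟨δ, hδ, hd⟩ := (hdis i j hij).exists_thickenings (hC i) (hC j).isClosed
      filter_upwards [Ioo_mem_nhdsGT hδ] with x hx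
      exact hd.mono (thickening_mono hx.2.le _) (thickening_mono hx.2.le _)
    exact (this.and self_mem_nhdsWithin).exists
  set η := min (δ / 3) (r / 24) with hηdef
  have hη : 0 < η := by positivity
  have hηδ : 3 * η ≤ δ := by linarith [min_le_left (δ / 3) (r / 24)]
  have hηr : 24 * η ≤ r := by linarith [min_le_right (δ / 3) (r / 24)]
  obtain ⟨Y, hYD, hY, hYc, hYapp⟩ := hD.exists_isCompact_approx
    (isCompact_iUnion hC) (iUnion_subset fun i => (hCK i).trans
      (frontier_compl K ▸ frontier_subset_closure)) hη
  obtain ⟨ε₀, hε₀, hYK⟩ := (disjoint_compl_left.mono_left hYD : Disjoint Y K).exists_thickenings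
    hY hK
  set ε := min η ε₀
  have hε : 0 < ε := lt_min hη hε₀
  have hεη : ε ≤ η := min_le_left _ _
  have hYε : ∀ S ⊆ K, Disjoint Y (thickening ε S) := fun S hS =>
    hYK.mono (self_subset_thickening hε₀ Y)
      ((thickening_mono (min_le_right _ _) S).trans (thickening_subset_of_subset _ hS))
  have hCδ : ∀ i, thickening ε (C i) ⊆ thickening δ (C i) := fun i =>
    thickening_mono (by linarith) _
  obtain ⟨g₁, hg₁, hag⟩ := (hR₁.isPathConnected_thickening hε).exists_path_through_family a
    (fun i => self_subset_thickening hε _ (haR i))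
  obtain ⟨g₂, hg₂, hbg⟩ := (hR₂.isPathConnected_thickening hε).exists_path_through_family b
    (fun i => self_subset_thickening hε _ (hbR i))
  have hG₁ := isCompact_range g₁.continuous
  have hG₂ := isCompact_range g₂.continuous
  have hG₁c := g₁.isPathConnected_range
  have hG₂c := g₂.isPathConnected_range
  set G₁ := range g₁
  set G₂ := range g₂
  have hl₁ : ∀ w ∈ G₁, dist w z < r / 3 + r / 24 := by
    intro w hw
    obtain ⟨x, hx, hwx⟩ := mem_thickening_iff.1 (hg₁ hw)
    linarith [dist_triangle w x z, hr₁ x hx]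
  have hl₂ : ∀ w ∈ G₂, 2 * r / 3 - r / 24 < dist w z := by
    intro w hw
    obtain ⟨x, hx, hwx⟩ := mem_thickening_iff.1 (hg₂ hw)
    linarith [dist_triangle x w z, hr₂ x hx, dist_comm x w]
  have hstrand : ∀ i, ∃ p x y, p ∈ thickening ε (C i) ∧ dist p z = r / 2 ∧
      x ∈ G₁ ∧ JoinedIn (thickening ε (C i) \ G₂) x p ∧
      y ∈ G₂ ∧ JoinedIn (thickening ε (C i) \ G₁) y p := by
    intro i
    obtain ⟨γ, hγ⟩ := ((hCc i).isPathConnected_thickening hε).joinedIn _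
      (self_subset_thickening hε _ (haC i)) _ (self_subset_thickening hε _ (hbC i))
    have hsub : γ.extend '' Icc 0 1 ⊆ thickening ε (C i) := by
      rintro _ ⟨t, ht, rfl⟩
      rw [γ.extend_apply ht]
      exact hγ _
    obtain ⟨p, hp, hpz, ⟨x, hx, hxp⟩, y, hy, hyp⟩ := exists_joinedIn_diff_of_level
      γ.continuous_extend hG₁.isClosed hG₂.isClosed (h := fun w => dist w z) (by fun_prop)
      (m := r / 2) (fun w hw => by linarith [hl₁ w hw]) (fun w hw => by linarith [hl₂ w hw])
      (by simpa using hag i) (by simpa using hbg i)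
    exact ⟨p, x, y, hsub hp, hpz, hx, hxp.mono (sdiff_subset_sdiff_left hsub), hy,
      hyp.mono (sdiff_subset_sdiff_left hsub)⟩
  choose p x y hpC hpz hx hxp hy hyp using hstrand
  have hq : ∀ i, ∃ q ∈ Y, dist q (p i) < 2 * η := by
    intro i
    obtain ⟨c, hc, hpc⟩ := mem_thickening_iff.1 (hpC i)
    obtain ⟨q, hq, hcq⟩ := hYapp c (mem_iUnion.2 ⟨i, hc⟩)
    refine ⟨q, hq, ?_⟩
    linarith [dist_triangle_left q (p i) c, dist_comm (p i) c]
  choose q hqY hqp using hq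
  have hball : ∀ i, ball (p i) (2 * η) ⊆ thickening δ (C i) := by
    intro i w hw
    obtain ⟨c, hc, hpc⟩ := mem_thickening_iff.1 (hpC i)
    refine mem_thickening_iff.2 ⟨c, hc, ?_⟩
    linarith [dist_triangle w (p i) c, mem_ball.1 hw]
  have hGG : Disjoint G₁ G₂ := disjoint_left.2 fun w h h' => by linarith [hl₁ w h, hl₂ w h']
  have hbG₁ : ∀ i, Disjoint (ball (p i) (2 * η)) G₁ := fun i => disjoint_left.2 fun w h h' => by
    linarith [hl₁ w h', mem_ball'.1 h, dist_triangle (p i) w z, hpz i]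
  have hbG₂ : ∀ i, Disjoint (ball (p i) (2 * η)) G₂ := fun i => disjoint_left.2 fun w h h' => by
    linarith [hl₂ w h', mem_ball.1 h, dist_triangle w (p i) z, hpz i]
  have hYG₁ : Disjoint Y G₁ := (hYε _ hR₁K).mono_right hg₁
  have hYG₂ : Disjoint Y G₂ := (hYε _ hR₂K).mono_right hg₂
  have hYC : ∀ i, Disjoint Y (thickening ε (C i)) := fun i =>
    hYε _ ((hCK i).trans hK.frontier_subset)
  have hCC : ∀ i j, i ≠ j → Disjoint (thickening ε (C i)) (thickening ε (C j)) := fun i j hij =>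
    (hδ i j hij).mono (hCδ i) (hCδ j)
  have hbC : ∀ i j, i ≠ j → Disjoint (ball (p i) (2 * η)) (thickening ε (C j)) := fun i j hij =>
    (hδ i j hij).mono (hball i) (hCδ j)
  have h01 : ∀ j l, j ≠ l → Disjoint (G₁ ∪ thickening ε (C j) \ G₂)
      (G₂ ∪ thickening ε (C l) \ G₁) := by
    intro j l hjl
    simp only [disjoint_union_left, disjoint_union_right]
    exact ⟨⟨hGG, disjoint_sdiff_left⟩, disjoint_sdiff_right,
      (hCC j l hjl).mono sdiff_subset sdiff_subset⟩
  have h20 : ∀ j l, j ≠ l → Disjoint (Y ∪ ball (p j) (2 * η))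
      (G₁ ∪ thickening ε (C l) \ G₂) := by
    intro j l hjl
    simp only [disjoint_union_left, disjoint_union_right]
    exact ⟨⟨hYG₁, hbG₁ j⟩, (hYC l).mono_right sdiff_subset, (hbC j l hjl).mono_right sdiff_subset⟩
  have h21 : ∀ j l, j ≠ l → Disjoint (Y ∪ ball (p j) (2 * η))
      (G₂ ∪ thickening ε (C l) \ G₁) := by
    intro j l hjl
    simp only [disjoint_union_left, disjoint_union_right]
    exact ⟨⟨hYG₂, hbG₂ j⟩, (hYC l).mono_right sdiff_subset, (hbC j l hjl).mono_right sdiff_subset⟩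
  refine false_of_joinedIn_completeBipartite (u := ![x 0, y 0, q 0]) (v := p)
    (S := ![fun j => G₁ ∪ thickening ε (C j) \ G₂, fun j => G₂ ∪ thickening ε (C j) \ G₁,
      fun j => Y ∪ ball (p j) (2 * η)]) (fun i j => ?_) (fun i j k l hik hjl => ?_)
  · fin_cases i
    · exact ((hG₁c.joinedIn _ (hx 0) _ (hx j)).mono subset_union_left).trans
        ((hxp j).mono subset_union_right)
    · exact ((hG₂c.joinedIn _ (hy 0) _ (hy j)).mono subset_union_left).trans
        ((hyp j).mono subset_union_right)
    · exact ((hYc.joinedIn _ (hqY 0) _ (hqY j)).mono subset_union_left).trans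
        ((((convex_ball (p j) (2 * η)).isPathConnected ⟨_, hqp j⟩).joinedIn _ (hqp j) _
          (mem_ball_self (by positivity))).mono subset_union_right)
  · fin_cases i <;> fin_cases k
    · exact absurd rfl hik
    · exact h01 j l hjl
    · exact (h20 l j hjl.symm).symm
    · exact (h01 l j hjl.symm).symm
    · exact absurd rfl hik
    · exact (h21 l j hjl.symm).symm
    · exact h20 j l hjl
    · exact h21 j l hjl
    · exact absurd rfl hik

theorem Complex.isConnected_setOf_lt_norm {R : ℝ} :
    IsConnected {w : ℂ | R < ‖w‖} := by
  have : {w : ℂ | R < ‖w‖} =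
      (fun p : ℝ × ℝ => (p.1 : ℂ) * Complex.exp (p.2 * Complex.I)) '' (Ioi R ×ˢ univ) := by
    ext w
    constructor
    · intro hw
      exact ⟨(‖w‖, w.arg), ⟨hw, mem_univ _⟩, Complex.norm_mul_exp_arg_mul_I w⟩
    · rintro ⟨⟨ρ, θ⟩, ⟨hρ, -⟩, rfl⟩
      have : R < ρ := hρ
      simpa [Complex.norm_exp_ofReal_mul_I] using this.trans_le (le_abs_self ρ)
  rw [this]
  exact (isConnected_Ioi.prod isConnected_univ).image _ (by fun_prop)

theorem IsFull.isConnected_compl {K : Set ℂ} (hfull : IsFull K) (hK : IsCompact K) :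
    IsConnected Kᶜ := by
  obtain ⟨R, -, hR⟩ := hK.isBounded.exists_pos_norm_le
  have hE := Complex.isConnected_setOf_lt_norm (R := R)
  have hEK : {w : ℂ | R < ‖w‖} ⊆ Kᶜ := fun w hw hwK => (hR w hwK).not_gt hw
  obtain ⟨d, hd⟩ := hE.nonempty
  refine ⟨⟨d, hEK hd⟩, isPreconnected_of_forall d fun w hw => ?_⟩
  obtain ⟨y, hy, hyR⟩ : ∃ y ∈ connectedComponentIn Kᶜ w, R < ‖y‖ := by
    by_contra! h
    exact hfull w hw (isBounded_iff_forall_norm_le.2 ⟨R, h⟩)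
  exact ⟨{w : ℂ | R < ‖w‖} ∪ connectedComponentIn Kᶜ w,
    union_subset hEK (connectedComponentIn_subset _ _), Or.inl hd,
    Or.inr (mem_connectedComponentIn hw),
    hE.isPreconnected.union y hyR hy isPreconnected_connectedComponentIn⟩

/-- Normed spaces are unicoherent. -/
theorem IsPreconnected.inter_of_union_eq_univ {E : Type*} [NormedAddCommGroup E]
    [NormedSpace ℝ E] {A B : Set E} (hA : IsPreconnected A) (hB : IsPreconnected B)
    (hAc : IsClosed A) (hBc : IsClosed B) (hAB : A ∪ B = univ) : IsPreconnected (A ∩ B) := by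
  rw [isPreconnected_closed_iff]
  rintro P Q hP hQ hPQ ⟨x, hx, hxP⟩ ⟨y, hy, hyQ⟩
  by_contra hemp
  have hdis : Disjoint (A ∩ B ∩ P) (A ∩ B ∩ Q) := disjoint_left.2 fun w h h' =>
    hemp ⟨w, h.1, h.2, h'.2⟩
  obtain ⟨g, hg0, hg1, -⟩ := exists_continuous_zero_one_of_isClosed
    ((hAc.inter hBc).inter hP) ((hAc.inter hBc).inter hQ) hdis
  classical
  let c : E → ℂ := fun w => 2 * Real.pi * Complex.I * (g w : ℂ)
  have hc : Continuous c := by fun_prop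
  have hcx : c x = 0 := by simp [c, hg0 ⟨hx, hxP⟩]
  have hcy : c y = 2 * Real.pi * Complex.I := by simp [c, hg1 ⟨hy, hyQ⟩]
  have hcAB : ∀ w ∈ A ∩ B, Complex.exp (c w) = 1 := by
    intro w hw
    rcases hPQ hw with h | h
    · simp [c, hg0 ⟨hw, h⟩]
    · simp [c, hg1 ⟨hw, h⟩, Complex.exp_two_pi_mul_I]
  have hfr : frontier A ⊆ A ∩ B := fun w hw => ⟨hAc.frontier_subset hw, by
    rw [← frontier_compl] at hw
    exact closure_minimal (fun v hv => (hAB ▸ mem_univ v : v ∈ A ∪ B).resolve_left hv) hBc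
      hw.1⟩
  have hcont : Continuous (A.piecewise (fun w => Complex.exp (c w)) fun _ => 1) :=
    Continuous.piecewise (fun w hw => hcAB w (hfr hw)) (by fun_prop) continuous_const
  obtain ⟨l, hl, hle⟩ := exists_continuous_log hcont (fun w => by
    by_cases hw : w ∈ A <;> simp [hw])
  have h1 := eq_of_forall_exp_eq_one hA (f := fun w => l w - c w) (by fun_prop)
    (fun w hw => by rw [Complex.exp_sub, hle, piecewise_eq_of_mem _ _ _ hw, div_self (by simp)])
    hx.1 hy.1
  have h2 := eq_of_forall_exp_eq_one hB (f := l) (by fun_prop)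
    (fun w hw => by
      rw [hle]
      by_cases hwA : w ∈ A
      · simpa [hwA] using hcAB w ⟨hwA, hw⟩
      · simp [hwA]) hx.2 hy.2
  refine Complex.two_pi_I_ne_zero ?_
  simp only [hcx, hcy, h2] at h1
  linear_combination h1

theorem disjoint_frontier_connectedComponentIn {O : Set ℂ} (hO : IsOpen O) (x : ℂ) :
    Disjoint (frontier (connectedComponentIn O x)) O := by
  refine disjoint_left.2 fun w hw hwO => ?_
  obtain ⟨v, hv, hvx⟩ := mem_closure_iff.1 hw.1 _ (hO.connectedComponentIn (x := w))
    (mem_connectedComponentIn hwO)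
  have : connectedComponentIn O w = connectedComponentIn O x :=
    (connectedComponentIn_eq hv).trans (connectedComponentIn_eq hvx).symm
  exact hw.2 (hO.connectedComponentIn.interior_eq.symm ▸ this ▸ mem_connectedComponentIn hwO)

theorem frontier_connectedComponentIn_interior_subset {K : Set ℂ} (x : ℂ) :
    frontier (connectedComponentIn (interior K) x) ⊆ frontier K := by
  intro w hw
  refine ⟨?_, disjoint_left.1 (disjoint_frontier_connectedComponentIn isOpen_interior x) hw⟩
  exact closure_mono ((connectedComponentIn_subset _ _).trans interior_subset) hw.1

theorem frontier_closure_connectedComponentIn_interior {K : Set ℂ} (hK : IsClosed K) (x : ℂ) :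
    frontier (closure (connectedComponentIn (interior K) x)) =
      frontier (connectedComponentIn (interior K) x) := by
  refine frontier_closure_subset.antisymm fun w hw => ⟨by rw [closure_closure]; exact hw.1, ?_⟩
  intro hwi
  refine disjoint_left.1 (disjoint_frontier_connectedComponentIn isOpen_interior x) hw ?_
  exact interior_mono (closure_minimal
    ((connectedComponentIn_subset _ _).trans interior_subset) hK) hwi

theorem isPreconnected_compl_connectedComponentIn_interior {K : Set ℂ} (hD : IsConnected Kᶜ)
    (x : ℂ) : IsPreconnected (connectedComponentIn (interior K) x)ᶜ := by
  set U := connectedComponentIn (interior K) x with hUdef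
  have hUo : IsOpen U := isOpen_interior.connectedComponentIn
  have hUK : U ⊆ interior K := connectedComponentIn_subset _ _
  have hDU : closure Kᶜ ⊆ Uᶜ := by
    rw [closure_compl]
    exact compl_subset_compl.2 hUK
  obtain ⟨d, hd⟩ := hD.nonempty
  have hd' : d ∈ closure Kᶜ := subset_closure hd
  refine isPreconnected_of_forall d fun w hw => ?_
  by_cases hwi : w ∈ interior K
  · set W := connectedComponentIn (interior K) w with hWdef
    have hwW : w ∈ W := mem_connectedComponentIn hwi
    have hWU : W ⊆ Uᶜ := by
      intro v hv hvU
      apply hw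
      rwa [hUdef, connectedComponentIn_eq hvU, ← connectedComponentIn_eq hv]
    have hWne : W ≠ univ := by
      intro h
      refine hd (interior_subset (connectedComponentIn_subset (interior K) w ?_))
      rw [← hWdef, h]
      exact mem_univ d
    obtain ⟨v, hv⟩ := nonempty_frontier_iff.2 ⟨⟨w, hwW⟩, hWne⟩
    have hvK := frontier_connectedComponentIn_interior_subset w hv
    rw [← frontier_compl] at hvK
    exact ⟨closure Kᶜ ∪ closure W, union_subset hDU (closure_minimal hWU hUo.isClosed_compl),
      Or.inl hd', Or.inr (subset_closure hwW), hD.isPreconnected.closure.union v hvK.1 hv.1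
        isPreconnected_connectedComponentIn.closure⟩
  · exact ⟨closure Kᶜ, hDU, hd', by rwa [closure_compl], hD.isPreconnected.closure⟩

theorem isPreconnected_frontier_connectedComponentIn_interior {K : Set ℂ}
    (hD : IsConnected Kᶜ) (x : ℂ) :
    IsPreconnected (frontier (connectedComponentIn (interior K) x)) := by
  rw [frontier_eq_closure_inter_closure,
    (isOpen_interior.connectedComponentIn (x := x)).isClosed_compl.closure_eq]
  refine isPreconnected_connectedComponentIn.closure.inter_of_union_eq_univ
    (isPreconnected_compl_connectedComponentIn_interior hD x) isClosed_closure
    isOpen_interior.connectedComponentIn.isClosed_compl ?_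
  exact eq_univ_of_subset (union_subset_union_left _ subset_closure) (union_compl_self _)

theorem IsClosed.connectedComponentIn_of_mem {X : Type*} [TopologicalSpace X] {F : Set X}
    (hF : IsClosed F) {x : X} (hx : x ∈ F) : IsClosed (_root_.connectedComponentIn F x) :=
  isClosed_of_closure_subset <|
    isPreconnected_connectedComponentIn.closure.subset_connectedComponentIn
      (subset_closure (mem_connectedComponentIn hx))
      (closure_minimal (connectedComponentIn_subset _ _) hF)

/-- In a continuum, components of the intersection with a closed ball reach the boundary sphere
unless the continuum is contained in the open ball. -/
theorem exists_mem_connectedComponentIn_dist_eq {X : Type*} [MetricSpace X]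
    {L : Set X} (hL : IsPreconnected L) (hLc : IsCompact L) {x z : X} {r : ℝ}
    (hx : x ∈ L ∩ closedBall z r) (hLr : ¬ L ⊆ ball z r) :
    ∃ w ∈ connectedComponentIn (L ∩ closedBall z r) x, dist w z = r := by
  by_contra! hno
  set F := L ∩ closedBall z r
  have hF : IsCompact F := hLc.inter_right isClosed_closedBall
  have : CompactSpace F := isCompact_iff_compactSpace.1 hF
  rw [connectedComponentIn_eq_image hx, connectedComponent_eq_iInter_isClopen] at hno
  have hnon : Nonempty {s : Set F // IsClopen s ∧ ⟨x, hx⟩ ∈ s} :=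
    ⟨⟨univ, isClopen_univ, mem_univ _⟩⟩
  obtain ⟨⟨Q, hQ, hxQ⟩, hQr⟩ := exists_subset_nhds_of_compactSpace
    (V := fun s : {s : Set F // IsClopen s ∧ ⟨x, hx⟩ ∈ s} => (s : Set F))
    (U := {y : F | dist (y : X) z ≠ r})
    (fun s t => ⟨⟨s ∩ t, s.2.1.inter t.2.1, s.2.2, t.2.2⟩, inter_subset_left,
      inter_subset_right⟩)
    (fun s => s.2.1.isClosed) (fun y hy =>
      (isOpen_ne_fun (by fun_prop) continuous_const).mem_nhds (hno y (mem_image_of_mem _ hy)))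
  have hQc : IsClosed (Subtype.val '' Q) :=
    (hQ.isClosed.isCompact.image continuous_subtype_val).isClosed
  have hQc' : IsClosed (Subtype.val '' Qᶜ) :=
    (hQ.compl.isClosed.isCompact.image continuous_subtype_val).isClosed
  obtain ⟨v, hvL, hv⟩ := not_subset.1 hLr
  rw [mem_ball, not_lt] at hv
  obtain ⟨w, -, ⟨y, hyQ, rfl⟩, hw⟩ := isPreconnected_closed_iff.1 hL (Subtype.val '' Q)
    ({w | r ≤ dist w z} ∪ Subtype.val '' Qᶜ) hQc
    ((isClosed_le continuous_const (by fun_prop)).union hQc')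
    (fun w hw => by
      by_cases hwr : r ≤ dist w z
      · exact Or.inr (Or.inl hwr)
      · by_cases hwQ : (⟨w, hw, (not_le.1 hwr).le⟩ : F) ∈ Q
        · exact Or.inl ⟨_, hwQ, rfl⟩
        · exact Or.inr (Or.inr ⟨_, hwQ, rfl⟩))
    ⟨x, hx.1, _, hxQ, rfl⟩ ⟨v, hvL, Or.inl hv⟩
  rcases hw with hw | ⟨y', hy', hyy⟩
  · exact hQr hyQ (le_antisymm y.2.2 hw)
  · exact hy' (Subtype.ext hyy ▸ hyQ)

/-- A continuum in the boundary of a locally connected closed set with path-connected complement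
is locally connected. -/
theorem exists_nhds_isConnected_inter_of_subset_frontier {K L : Set ℂ} (hK : IsClosed K)
    (hD : IsPathConnected Kᶜ)
    (hlc : ∀ w ∈ K, ∀ U ∈ 𝓝 w, ∃ V ∈ 𝓝 w, V ⊆ U ∧ IsConnected (V ∩ K))
    (hL : IsPreconnected L) (hLc : IsCompact L) (hLK : L ⊆ frontier K) {z : ℂ} (hz : z ∈ L)
    {N : Set ℂ} (hN : N ∈ 𝓝 z) : ∃ V ∈ 𝓝 z, V ⊆ N ∧ IsConnected (V ∩ L) := by
  obtain ⟨r, hr, hrN⟩ := nhds_basis_closedBall.mem_iff.1 hN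
  by_cases hLr : L ⊆ ball z r
  · refine ⟨closedBall z r, closedBall_mem_nhds z hr, hrN, ?_⟩
    rw [inter_eq_self_of_subset_right (hLr.trans ball_subset_closedBall)]
    exact ⟨⟨z, hz⟩, hL⟩
  set F := L ∩ closedBall z r
  have hFc : IsCompact F := hLc.inter_right isClosed_closedBall
  have hzF : z ∈ F := ⟨hz, mem_closedBall_self hr.le⟩
  have hcc : ∀ y ∈ F, IsCompact (connectedComponentIn F y) := fun y hy =>
    hFc.of_isClosed_subset (hFc.isClosed.connectedComponentIn_of_mem hy)
      (connectedComponentIn_subset _ _)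
  by_cases hnhds : connectedComponentIn F z ∪ closedBall z r \ L ∈ 𝓝 z
  · refine ⟨_, hnhds, (union_subset ((connectedComponentIn_subset _ _).trans
      inter_subset_right) sdiff_subset).trans hrN, ?_⟩
    rw [union_inter_distrib_right, sdiff_inter_self, union_empty,
      inter_eq_self_of_subset_left ((connectedComponentIn_subset _ _).trans inter_subset_left)]
    exact isConnected_connectedComponentIn_iff.2 hzF
  exfalso
  have hy : ∀ n : ℕ, ∃ y ∈ F, y ∉ connectedComponentIn F z ∧ dist y z < 1 / (n + 1) := by
    intro n
    by_contra! h
    apply hnhds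
    filter_upwards [ball_mem_nhds z (Nat.one_div_pos_of_nat (n := n)), closedBall_mem_nhds z hr]
      with w hw hwr
    by_cases hwL : w ∈ L
    · by_contra hwC
      exact (h w ⟨hwL, hwr⟩ fun hc => hwC (Or.inl hc)).not_gt hw
    · exact Or.inr ⟨hwr, hwL⟩
  choose y hyF hyC hyz using hy
  have hytend : Tendsto y atTop (𝓝 z) := tendsto_iff_dist_tendsto_zero.2
    (squeeze_zero (fun _ => dist_nonneg) (fun n => (hyz n).le)
      tendsto_one_div_add_atTop_nhds_zero_nat)
  choose b hbC hbr using fun n => exists_mem_connectedComponentIn_dist_eq hL hLc (hyF n) hLr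
  obtain ⟨b₀, hb₀, φ, hφ, hbtend⟩ := hFc.tendsto_subseq fun n =>
    connectedComponentIn_subset _ _ (hbC n)
  have hLK' : L ⊆ K := hLK.trans hK.frontier_subset
  have hb₀r : dist b₀ z = r :=
    tendsto_nhds_unique (hbtend.dist tendsto_const_nhds) (by simp [hbr])
  obtain ⟨V₁, hV₁, hV₁r, hV₁c⟩ := hlc z (hLK' hz) _ (ball_mem_nhds z (by positivity : 0 < r / 3))
  obtain ⟨V₂, hV₂, hV₂r, hV₂c⟩ := hlc b₀ (hLK' hb₀.1) _
    (ball_mem_nhds b₀ (by positivity : 0 < r / 3))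
  have hev : ∀ᶠ n in atTop, y (φ n) ∈ V₁ ∧ b (φ n) ∈ V₂ :=
    ((hytend.comp hφ.tendsto_atTop).eventually_mem hV₁).and (hbtend.eventually_mem hV₂)
  have havoid : ∀ m, ∀ᶠ n in atTop, y (φ n) ∉ connectedComponentIn F (y m) := by
    intro m
    have hzm : z ∉ connectedComponentIn F (y m) := fun h =>
      hyC m (connectedComponentIn_eq h ▸ mem_connectedComponentIn (hyF m))
    exact (hytend.comp hφ.tendsto_atTop).eventually_mem
      ((hcc _ (hyF m)).isClosed.isOpen_compl.mem_nhds hzm)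
  obtain ⟨n₀, h₀⟩ := hev.exists
  obtain ⟨n₁, h₁, h₁₀⟩ := (hev.and (havoid (φ n₀))).exists
  obtain ⟨n₂, h₂, h₂₀, h₂₁⟩ := (hev.and ((havoid (φ n₀)).and (havoid (φ n₁)))).exists
  have hdis : ∀ m n, y n ∉ connectedComponentIn F (y m) →
      Disjoint (connectedComponentIn F (y m)) (connectedComponentIn F (y n)) := by
    intro m n hmn
    refine disjoint_left.2 fun w hwm hwn => hmn ?_
    rw [connectedComponentIn_eq hwm, ← connectedComponentIn_eq hwn]
    exact mem_connectedComponentIn (hyF n)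
  let ν : Fin 3 → ℕ := ![φ n₀, φ n₁, φ n₂]
  have hν : ∀ i, y (ν i) ∈ V₁ ∧ b (ν i) ∈ V₂ := by
    intro i
    fin_cases i
    exacts [h₀, h₁, h₂]
  have hsub : ∀ n, connectedComponentIn F (y n) ⊆ L := fun n =>
    (connectedComponentIn_subset _ _).trans inter_subset_left
  refine false_of_three_strands (C := fun i => connectedComponentIn F (y (ν i)))
    (a := fun i => y (ν i)) (b := fun i => b (ν i)) hK hD hV₁c inter_subset_right hV₂c
    inter_subset_right (fun i => hcc _ (hyF _))
    (fun i => isConnected_connectedComponentIn_iff.2 (hyF _)) (fun i => (hsub _).trans hLK)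
    (fun i j hij => ?_) (fun i => mem_connectedComponentIn (hyF _))
    (fun i => ⟨(hν i).1, hLK' (hyF _).1⟩) (fun i => hbC _)
    (fun i => ⟨(hν i).2, hLK' (hsub _ (hbC _))⟩) hr (z := z) (fun w hw => hV₁r hw.1)
    (fun w hw => ?_)
  · fin_cases i <;> fin_cases j
    · exact absurd rfl hij
    · exact hdis _ _ h₁₀
    · exact hdis _ _ h₂₀
    · exact (hdis _ _ h₁₀).symm
    · exact absurd rfl hij
    · exact hdis _ _ h₂₁
    · exact (hdis _ _ h₂₀).symm
    · exact (hdis _ _ h₂₁).symm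
    · exact absurd rfl hij
  · have := mem_ball.1 (hV₂r hw.1)
    linarith [dist_triangle_left b₀ z w]

/-- Let `K ⊂ ℂ` be compact, connected, full and locally connected. Then the closure of
any connected component of the interior of `K` has locally connected boundary. -/
theorem interior_component_boundary_locally_connected (K : Set ℂ)
    (hK : IsCompact K) (hconn : IsConnected K) (hfull : IsFull K)
    (hlc : ∀ w ∈ K, ∀ U ∈ nhds w, ∃ V ∈ nhds w, V ⊆ U ∧ IsConnected (V ∩ K))
    (x : ℂ) (hx : x ∈ interior K)
    (K₀ : Set ℂ) (hK₀ : K₀ = closure (connectedComponentIn (interior K) x)) :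
    ∀ z ∈ frontier K₀, ∀ U ∈ nhds z, ∃ V ∈ nhds z, V ⊆ U ∧
      IsConnected (V ∩ frontier K₀) := by
  subst hK₀
  rw [frontier_closure_connectedComponentIn_interior hK.isClosed]
  intro z hz U hU
  have hD := hfull.isConnected_compl hK
  have hsub := frontier_connectedComponentIn_interior_subset (K := K) x
  exact exists_nhds_isConnected_inter_of_subset_frontier hK.isClosed
    (hK.isClosed.isOpen_compl.isConnected_iff_isPathConnected.1 hD) hlc
    (isPreconnected_frontier_connectedComponentIn_interior hD x)
    (hK.of_isClosed_subset isClosed_frontier (hsub.trans hK.isClosed.frontier_subset)) hsub hz hU
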